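/- Let F₄ = GF(4), let n be odd, let g be a monic divisor of Xⁿ−1 in F₄[X], and let ν ∈ F₄[X]. For all c, c' ∈ F₄[X], the Hermitian inner product in F₄^{2n} satisfies ⟨([−ν̄·c·g^{⊥h}]ₙ, [c·g^{⊥h}]ₙ), ([−ν̄·c'·g^{⊥h}]ₙ, [c'·g^{⊥h}]ₙ)⟩_h = ⟨[c·g^{⊥h}]ₙ, [c'·(ν·ν̄+1)·g^{⊥h}]ₙ⟩_h, where the inner product of a pair in F₄ⁿ × F₄ⁿ is the sum of the Hermitian inner products of the two components. -/

import Mathlib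

open Polynomial

set_option synthInstance.maxHeartbeats 1000000
set_option maxHeartbeats 1000000

noncomputable section

/-- The field `F₄ = GF(4)`. -/
abbrev F4 : Type := GaloisField 2 2

/-- The coefficient vector `[p]ₙ ∈ F₄ⁿ` of the remainder of `p` modulo `Xⁿ - 1`
(coefficient of `X^i` in position `i`). -/
def coeffVec (n : ℕ) (p : Polynomial F4) : Fin n → F4 :=
  fun i => (p % (X ^ n - 1)).coeff i

/-- The Hermitian inner product `⟨u,v⟩_h = ∑ i, u i * (v i)²` on `F₄^m`. -/
def hermInner {m : ℕ} (u v : Fin m → F4) : F4 := ∑ i, u i * (v i) ^ 2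

/-- The Hermitian inner product on `F₄ⁿ × F₄ⁿ`: the sum of the Hermitian inner
products of the two components. -/
def hermInner2 {n : ℕ} (u v : (Fin n → F4) × (Fin n → F4)) : F4 :=
  hermInner u.1 v.1 + hermInner u.2 v.2

/-- The conjugate transform `f̄ := f₀² + ∑_{i=1}^{n-1} f_i² X^{n-i}`, where `f` is first
reduced modulo `Xⁿ - 1`. -/
def conjT (n : ℕ) (f : Polynomial F4) : Polynomial F4 :=
  C (((f % (X ^ n - 1)).coeff 0) ^ 2) +
    ∑ i ∈ Finset.Ico 1 n, C (((f % (X ^ n - 1)).coeff i) ^ 2) * X ^ (n - i)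

/-- The Hermitian dual generator `g^{⊥h}(X) := ∑_{j=0}^{deg h} (h_j)² X^{deg h - j}`,
the conjugate reciprocal of the check polynomial `h = (Xⁿ-1)/g`. -/
def dualGen (n : ℕ) (g : Polynomial F4) : Polynomial F4 :=
  ∑ j ∈ Finset.range (((X ^ n - 1) / g).natDegree + 1),
    C ((((X ^ n - 1) / g).coeff j) ^ 2) * X ^ (((X ^ n - 1) / g).natDegree - j)

lemma hermInner_add_right {m : ℕ} (u v w : Fin m → F4) :
    hermInner u (v + w) = hermInner u v + hermInner u w := by
  simp only [hermInner, Pi.add_apply]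
  rw [← Finset.sum_add_distrib]
  refine Finset.sum_congr rfl fun i _ => ?_
  rw [add_pow_char (v i) (w i) 2, mul_add]

lemma hermInner_smul_right {m : ℕ} (c : F4) (u v : Fin m → F4) :
    hermInner u (c • v) = c ^ 2 * hermInner u v := by
  simp only [hermInner, Pi.smul_apply, smul_eq_mul, mul_pow, Finset.mul_sum]
  exact Finset.sum_congr rfl fun i _ => by ring

/-- The Hermitian dual code `C^{⊥h} = {v | ∀ u ∈ C, ⟨u,v⟩_h = 0}` of a linear code in `F₄^m`. -/
def hermDual {m : ℕ} (Ccode : Submodule F4 (Fin m → F4)) : Submodule F4 (Fin m → F4) where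
  carrier := {v | ∀ u ∈ Ccode, hermInner u v = 0}
  zero_mem' := by intro u _; simp [hermInner]
  add_mem' := by
    intro v w hv hw u hu
    rw [hermInner_add_right, hv u hu, hw u hu, add_zero]
  smul_mem' := by
    intro c v hv u hu
    rw [hermInner_smul_right, hv u hu, mul_zero]

lemma hermInner2_add_right {n : ℕ} (u v w : (Fin n → F4) × (Fin n → F4)) :
    hermInner2 u (v + w) = hermInner2 u v + hermInner2 u w := by
  simp only [hermInner2, Prod.fst_add, Prod.snd_add, hermInner_add_right]
  ring

lemma hermInner2_smul_right {n : ℕ} (c : F4) (u v : (Fin n → F4) × (Fin n → F4)) :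
    hermInner2 u (c • v) = c ^ 2 * hermInner2 u v := by
  simp only [hermInner2, Prod.smul_fst, Prod.smul_snd, hermInner_smul_right]
  ring

/-- The Hermitian dual code of a linear code in `F₄ⁿ × F₄ⁿ` (identified with `F₄^{2n}`). -/
def hermDualPair {n : ℕ} (Ccode : Submodule F4 ((Fin n → F4) × (Fin n → F4))) :
    Submodule F4 ((Fin n → F4) × (Fin n → F4)) where
  carrier := {v | ∀ u ∈ Ccode, hermInner2 u v = 0}
  zero_mem' := by intro u _; simp [hermInner2, hermInner]
  add_mem' := by
    intro v w hv hw u hu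
    rw [hermInner2_add_right, hv u hu, hw u hu, add_zero]
  smul_mem' := by
    intro c v hv u hu
    rw [hermInner2_smul_right, hv u hu, mul_zero]

/-- Hamming weight of a vector. -/
def hammingWt {m : ℕ} (u : Fin m → F4) : ℕ := Nat.card {i : Fin m // u i ≠ 0}

/-- The 2-generator quasi-cyclic code `C(g₁,g₂,ν)` of length `2n` and index 2:
the `F₄`-span of all `([a·ν·g₁]ₙ, [a·g₁]ₙ)` and `([b·g₂]ₙ, [b·ν·g₂]ₙ)`. -/
def Cqc (n : ℕ) (g₁ g₂ ν : Polynomial F4) : Submodule F4 ((Fin n → F4) × (Fin n → F4)) :=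
  Submodule.span F4
    ({x | ∃ a : Polynomial F4, x = (coeffVec n (a * ν * g₁), coeffVec n (a * g₁))} ∪
     {x | ∃ b : Polynomial F4, x = (coeffVec n (b * g₂), coeffVec n (b * ν * g₂))})

/-- The quasi-cyclic code `D`: the `F₄`-span of all `([-ν̄·c·g₁^{⊥h}]ₙ, [c·g₁^{⊥h}]ₙ)`
and `([s·g₂^{⊥h}]ₙ, [-ν̄·s·g₂^{⊥h}]ₙ)`. -/
def Dqc (n : ℕ) (g₁ g₂ ν : Polynomial F4) : Submodule F4 ((Fin n → F4) × (Fin n → F4)) :=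
  Submodule.span F4
    ({x | ∃ c : Polynomial F4,
        x = (coeffVec n (-(conjT n ν) * c * dualGen n g₁), coeffVec n (c * dualGen n g₁))} ∪
     {x | ∃ s : Polynomial F4,
        x = (coeffVec n (s * dualGen n g₂), coeffVec n (-(conjT n ν) * s * dualGen n g₂))})

/-- The quotient ring `R = F₄[X]/(Xⁿ - 1)`. -/
abbrev Rng (n : ℕ) : Type := Polynomial F4 ⧸ Ideal.span ({X ^ n - 1} : Set (Polynomial F4))

/-- The natural projection `F₄[X] → R`. -/
def toRng (n : ℕ) : Polynomial F4 →+* Rng n := Ideal.Quotient.mk _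

/-- The `R`-linear map `R → R × R`, `a ↦ (a·û, a·v̂)`, where `û, v̂` are the images of
`u, v` in `R`. -/
def qcMap (n : ℕ) (u v : Polynomial F4) : Rng n →ₗ[Rng n] Rng n × Rng n :=
  (LinearMap.toSpanSingleton (Rng n) (Rng n) (toRng n u)).prod
    (LinearMap.toSpanSingleton (Rng n) (Rng n) (toRng n v))

/-!
Multiplication by `X` acts on coefficient vectors modulo `X ^ n - 1` as a cyclic shift, hence is an
isometry for the Hermitian inner product; so the adjoint of multiplication by `X ^ i` is
multiplication by `X ^ (n - i)`. As scalars pass across the form by squaring, multiplication by `ν̄`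
and by `ν` are adjoint, and `⟨ν̄p, ν̄q⟩ + ⟨p, q⟩ = ⟨p, (νν̄ + 1)q⟩`.
-/

lemma X_mul_mod_X_pow_sub_one {F : Type*} [Field F] (n : ℕ) (p : F[X]) :
    (X * p) % (X ^ (n + 1) - 1) =
      X * (p % (X ^ (n + 1) - 1)) - C ((p % (X ^ (n + 1) - 1)).coeff n) * (X ^ (n + 1) - 1) := by
  set m : F[X] := X ^ (n + 1) - 1
  set r : F[X] := p % m
  have hm : m.degree = ↑(n + 1) := degree_X_pow_sub_C n.succ_pos 1
  have hm₀ : m ≠ 0 := X_pow_sub_C_ne_zero n.succ_pos 1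
  have hr : ∀ k, n + 1 ≤ k → r.coeff k = 0 :=
    (degree_lt_iff_coeff_zero r (n + 1)).1 (hm ▸ EuclideanDomain.mod_lt p hm₀)
  have hdeg : (X * r - C (r.coeff n) * m).degree < m.degree := by
    rw [hm, degree_lt_iff_coeff_zero]
    rintro (_ | k) hk
    · omega
    · obtain rfl | hlt := eq_or_lt_of_le (Nat.le_of_succ_le_succ hk)
      · simp [m, coeff_X_pow, coeff_one]
      · simp [m, coeff_X_pow, coeff_one, hr k hlt, hlt.ne']
  have hdvd : m ∣ X * p - (X * r - C (r.coeff n) * m) :=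
    ⟨X * (p / m) + C (r.coeff n), by
      linear_combination -X * EuclideanDomain.div_add_mod p m⟩
  rw [mod_eq_of_dvd_sub hdvd, (mod_eq_self_iff hm₀).2 hdeg]

lemma coeffVec_eq_of_dvd_sub {n : ℕ} {p q : F4[X]} (h : X ^ n - 1 ∣ p - q) :
    coeffVec n p = coeffVec n q := by
  funext i
  rw [coeffVec, coeffVec, mod_eq_of_dvd_sub h]

lemma coeffVec_add (n : ℕ) (p q : F4[X]) :
    coeffVec n (p + q) = coeffVec n p + coeffVec n q := by
  funext i
  simp only [coeffVec, add_mod, coeff_add, Pi.add_apply]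

lemma coeffVec_sum {ι : Type*} (n : ℕ) (s : Finset ι) (f : ι → F4[X]) :
    coeffVec n (∑ i ∈ s, f i) = ∑ i ∈ s, coeffVec n (f i) :=
  map_sum (AddMonoidHom.mk' (coeffVec n) (coeffVec_add n)) f s

lemma coeffVec_C_mul (n : ℕ) (a : F4) (p : F4[X]) :
    coeffVec n (C a * p) = a • coeffVec n p := by
  funext i
  simp only [coeffVec, ← smul_eq_C_mul, Polynomial.mod_def, smul_modByMonic, coeff_smul,
    Pi.smul_apply]

lemma coeffVec_mod_mul (n : ℕ) (p q : F4[X]) :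
    coeffVec n (p % (X ^ n - 1) * q) = coeffVec n (p * q) :=
  coeffVec_eq_of_dvd_sub ⟨-(p / (X ^ n - 1)) * q, by
    linear_combination q * EuclideanDomain.div_add_mod p (X ^ n - 1)⟩

lemma coeffVec_X_pow_self_mul (n : ℕ) (p : F4[X]) : coeffVec n (X ^ n * p) = coeffVec n p :=
  coeffVec_eq_of_dvd_sub ⟨p, by ring⟩

lemma coeffVec_X_mul_comp_finRotate (n : ℕ) (p : F4[X]) :
    coeffVec n (X * p) ∘ finRotate n = coeffVec n p := by
  cases n with
  | zero => exact Subsingleton.elim _ _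
  | succ n =>
    funext i
    simp only [Function.comp_apply, coeffVec, X_mul_mod_X_pow_sub_one]
    obtain ⟨i, rfl⟩ | rfl := i.eq_castSucc_or_eq_last
    · simp [coeff_X_pow, coeff_one, i.isLt.ne]
    · simp

lemma hermInner_comp_equiv {m k : ℕ} (e : Fin m ≃ Fin k) (u v : Fin k → F4) :
    hermInner (u ∘ e) (v ∘ e) = hermInner u v :=
  e.sum_comp fun i => u i * v i ^ 2

lemma hermInner_smul_left {m : ℕ} (a : F4) (u v : Fin m → F4) :
    hermInner (a • u) v = a * hermInner u v := by
  simp only [hermInner, Pi.smul_apply, smul_eq_mul, mul_assoc, Finset.mul_sum]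

lemma hermInner_sum_left {ι : Type*} {m : ℕ} (s : Finset ι) (u : ι → Fin m → F4)
    (v : Fin m → F4) : hermInner (∑ i ∈ s, u i) v = ∑ i ∈ s, hermInner (u i) v := by
  simp only [hermInner, Finset.sum_apply, Finset.sum_mul]
  exact Finset.sum_comm

lemma hermInner_sum_right {ι : Type*} {m : ℕ} (s : Finset ι) (u : Fin m → F4)
    (v : ι → Fin m → F4) : hermInner u (∑ i ∈ s, v i) = ∑ i ∈ s, hermInner u (v i) :=
  map_sum (AddMonoidHom.mk' (hermInner u) (hermInner_add_right u)) v s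

lemma hermInner_coeffVec_X_pow_mul (n k : ℕ) (p q : F4[X]) :
    hermInner (coeffVec n (X ^ k * p)) (coeffVec n (X ^ k * q)) =
      hermInner (coeffVec n p) (coeffVec n q) := by
  induction k with
  | zero => simp only [pow_zero, one_mul]
  | succ k ih =>
    rw [pow_succ', mul_assoc, mul_assoc, ← hermInner_comp_equiv (finRotate n),
      coeffVec_X_mul_comp_finRotate, coeffVec_X_mul_comp_finRotate, ih]

lemma hermInner_coeffVec_X_pow_sub_mul {n i : ℕ} (hi : i ≤ n) (p q : F4[X]) :
    hermInner (coeffVec n (X ^ (n - i) * p)) (coeffVec n q) =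
      hermInner (coeffVec n p) (coeffVec n (X ^ i * q)) := by
  rw [← hermInner_coeffVec_X_pow_mul n i, ← mul_assoc, pow_mul_pow_sub X hi,
    coeffVec_X_pow_self_mul]

lemma coeffVec_mul_eq_sum {n : ℕ} (hn : 0 < n) (p q : F4[X]) :
    coeffVec n (p * q) =
      ∑ i ∈ Finset.range n, (p % (X ^ n - 1)).coeff i • coeffVec n (X ^ i * q) := by
  have hm : (X ^ n - 1 : F4[X]).natDegree = n := natDegree_X_pow_sub_C
  have hr : (p % (X ^ n - 1)).natDegree < n :=
    (natDegree_mod_lt p (hm.trans_ne hn.ne')).trans_eq hm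
  rw [← coeffVec_mod_mul]
  conv_lhs => rw [as_sum_range_C_mul_X_pow' _ hr, Finset.sum_mul, coeffVec_sum]
  simp only [mul_assoc, coeffVec_C_mul]

lemma coeffVec_conjT_mul_eq_sum {n : ℕ} (hn : 0 < n) (p q : F4[X]) :
    coeffVec n (conjT n p * q) =
      ∑ i ∈ Finset.range n,
        (p % (X ^ n - 1)).coeff i ^ 2 • coeffVec n (X ^ (n - i) * q) := by
  rw [Finset.range_eq_Ico, Finset.sum_eq_sum_Ico_succ_bot hn, Nat.sub_zero,
    coeffVec_X_pow_self_mul, conjT, add_mul, coeffVec_add, coeffVec_C_mul, Finset.sum_mul,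
    coeffVec_sum]
  simp only [mul_assoc, coeffVec_C_mul, zero_add]

lemma hermInner_coeffVec_conjT_mul {n : ℕ} (hn : 0 < n) (ν p q : F4[X]) :
    hermInner (coeffVec n (conjT n ν * p)) (coeffVec n q) =
      hermInner (coeffVec n p) (coeffVec n (ν * q)) := by
  rw [coeffVec_conjT_mul_eq_sum hn, coeffVec_mul_eq_sum hn, hermInner_sum_left,
    hermInner_sum_right]
  refine Finset.sum_congr rfl fun i hi => ?_
  rw [hermInner_smul_left, hermInner_smul_right,
    hermInner_coeffVec_X_pow_sub_mul (Finset.mem_range.1 hi).le]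

theorem herm_inner_same_generator_general {n : ℕ} (hn : 0 < n) (ν p q : F4[X]) :
    hermInner2 (coeffVec n (-(conjT n ν) * p), coeffVec n p)
        (coeffVec n (-(conjT n ν) * q), coeffVec n q) =
      hermInner (coeffVec n p) (coeffVec n ((ν * conjT n ν + 1) * q)) := by
  rw [hermInner2, CharTwo.neg_eq, hermInner_coeffVec_conjT_mul hn, ← hermInner_add_right,
    ← coeffVec_add, ← mul_assoc, add_one_mul]

/-- Key computation for self-orthogonality of a 1-generator component of the dual code:
the Hermitian inner product reduces to `⟨[c·g^{⊥h}]ₙ, [c'·(ν·ν̄+1)·g^{⊥h}]ₙ⟩_h`. -/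
theorem herm_inner_same_generator (n : ℕ) (hn : Odd n) (g ν : Polynomial F4)
    (hgm : g.Monic) (hgd : g ∣ X ^ n - 1) :
    ∀ c c' : Polynomial F4,
      hermInner2
        (coeffVec n (-(conjT n ν) * c * dualGen n g), coeffVec n (c * dualGen n g))
        (coeffVec n (-(conjT n ν) * c' * dualGen n g), coeffVec n (c' * dualGen n g)) =
      hermInner (coeffVec n (c * dualGen n g))
        (coeffVec n (c' * (ν * conjT n ν + 1) * dualGen n g)) := by
  intro c c'
  simpa only [mul_assoc, mul_left_comm c'] using
    herm_inner_same_generator_general hn.pos ν (c * dualGen n g) (c' * dualGen n g)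

end
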